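/- Let n ≥ 1 and δ ∈ (0, n). There exists a constant c > 0 depending only on δ and n such that for every f : ℝⁿ → [−∞, ∞] with ∫_K |f| dH̃^δ_∞ < ∞ for every bounded set K ⊆ ℝⁿ, and for every t > 0, the weak-type estimate H̃^δ_∞({x ∈ ℝⁿ : M^n f(x) > t}) ≤ (c/t) ∫_{ℝⁿ} |f| dH̃^δ_∞ holds, where M^n is the n-dimensional Hausdorff-content centred maximal operator. -/

import Mathlib

open MeasureTheory Set Metric Filter Topology
open scoped ENNReal

noncomputable section

/-- Euclidean space `ℝⁿ`. -/
abbrev En (n : ℕ) : Type := EuclideanSpace ℝ (Fin n)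

/-- The half-open dyadic cube `2^k (m + [0,1)ⁿ)`, `k : ℤ`, `m : ℤⁿ`. -/
def dyadicCube (n : ℕ) (k : ℤ) (m : Fin n → ℤ) : Set (En n) :=
  {x | ∀ i, (m i : ℝ) * 2 ^ k ≤ x i ∧ x i < ((m i : ℝ) + 1) * 2 ^ k}

/-- The `δ`-dimensional dyadic Hausdorff content `H̃^δ_∞`: the infimum of `Σ ℓ(Q_i)^δ`
over all countable collections of dyadic cubes whose union's interior covers `E`. -/
def dyadicContent (n : ℕ) (δ : ℝ) (E : Set (En n)) : ℝ≥0∞ :=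
  ⨅ (c : ℕ → ℤ × (Fin n → ℤ))
    (_ : E ⊆ interior (⋃ i, dyadicCube n (c i).1 (c i).2)),
    ∑' i, ENNReal.ofReal (((2 : ℝ) ^ (c i).1) ^ δ)

/-- The Choquet integral `∫_Ω f dH̃^δ_∞ := ∫_0^∞ H̃^δ_∞({x ∈ Ω : f x > t}) dt`
of a `[0,∞]`-valued function over `Ω ⊆ ℝⁿ`. -/
def choquetIntegral (n : ℕ) (δ : ℝ) (Ω : Set (En n)) (f : En n → ℝ≥0∞) : ℝ≥0∞ :=
  ∫⁻ t in Ioi (0 : ℝ), dyadicContent n δ {x | x ∈ Ω ∧ ENNReal.ofReal t < f x}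

/-- The Choquet integral `∫_Ω |f| dH̃^δ_∞` of a real-valued function. -/
def choquetIntegralAbs (n : ℕ) (δ : ℝ) (Ω : Set (En n)) (f : En n → ℝ) : ℝ≥0∞ :=
  choquetIntegral n δ Ω (fun x => ENNReal.ofReal |f x|)

/-- The Choquet integral `∫_Ω |f| dH̃^δ_∞` of an extended-real-valued function. -/
def choquetIntegralEAbs (n : ℕ) (δ : ℝ) (Ω : Set (En n)) (f : En n → EReal) : ℝ≥0∞ :=
  choquetIntegral n δ Ω (fun x => (f x).abs)

/-- The ball average `f^δ_{B(x,r)} := (1/H̃^δ_∞(B(x,r))) ∫_{B(x,r)} f dH̃^δ_∞`. -/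
def ballAvg (n : ℕ) (δ : ℝ) (f : En n → ℝ≥0∞) (x : En n) (r : ℝ) : ℝ≥0∞ :=
  choquetIntegral n δ (ball x r) f / dyadicContent n δ (ball x r)

/-- The Hausdorff-content centred maximal function `M^δ f(x)`. -/
def maximal (n : ℕ) (δ : ℝ) (f : En n → ℝ≥0∞) (x : En n) : ℝ≥0∞ :=
  ⨆ (r : ℝ) (_ : 0 < r), ballAvg n δ f x r

/-- `f^δ_*(x) := limsup_{r→0⁺} (1/H̃^δ_∞(B(x,r))) ∫_{B(x,r)} |f(y) − f(x)| dH̃^δ_∞(y)`. -/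
def lebDev (n : ℕ) (δ : ℝ) (f : En n → ℝ) (x : En n) : ℝ≥0∞ :=
  limsup (fun r : ℝ => choquetIntegralAbs n δ (ball x r) (fun y => f y - f x) /
    dyadicContent n δ (ball x r)) (𝓝[>] (0 : ℝ))

/-- `limsup_{r→0⁺} f^δ_{B(x,r)}` of the ball averages. -/
def limsupAvg (n : ℕ) (δ : ℝ) (f : En n → ℝ≥0∞) (x : En n) : ℝ≥0∞ :=
  limsup (fun r : ℝ => ballAvg n δ f x r) (𝓝[>] (0 : ℝ))

/-!
Discretize the Choquet integral at the levels `2^k a` and cover each superlevel set `{2^k a < g}`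
almost optimally by dyadic cubes. Each cube `Q` is replaced by an atom of mass `ℓ(Q)^δ`, and the
atoms of level `k` are weighted by `2^k`, giving a measure `μ` of total mass about
`a⁻¹ ∫ g dH̃^δ_∞`.

If `M^d g(x) > 2a` is witnessed by `B(x, r)`, then either `x` lies within `ℓ(Q)` of some covering
cube `Q`, and the content of such points is at most `3ⁿ μ(ℝⁿ)`; or every covering cube meeting
`B(x, r)` has side at most `r`. In the second case `ℓ(Q)^d ≤ r^(d-δ) ℓ(Q)^δ`, so
`r^d ≲ H̃^d_∞(B(x, r)) ≲ r^(d-δ) μ(B(x, Lr))` with `L = √n + 1`, that is `r^δ ≲ μ(B(x, Lr))`, and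
the Vitali covering lemma bounds the content of these points by a multiple of `μ(ℝⁿ)`.

Because only covers enter, no subadditivity of the Choquet integral is used.
-/

section Tsum

variable {ι : Type*}

theorem rpow_tsum_le_tsum_rpow {p : ℝ} (hp0 : 0 < p) (hp1 : p ≤ 1) (f : ι → ℝ≥0∞) :
    (∑' i, f i) ^ p ≤ ∑' i, f i ^ p :=
  le_of_tendsto_of_tendsto' ((ENNReal.summable.hasSum : HasSum f _).ennrpow_const p)
    ENNReal.summable.hasSum fun s =>
      Finset.le_sum_of_subadditive (· ^ p) (ENNReal.zero_rpow_of_pos hp0).le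
        (fun a b => ENNReal.rpow_add_le_add_rpow a b hp0.le hp1) s f

theorem iInf_tsum_le_tsum_iInf [Countable ι] {κ : ι → Type*} (F : ∀ i, κ i → ℝ≥0∞) :
    ⨅ c : ∀ i, κ i, ∑' i, F i (c i) ≤ ∑' i, ⨅ j, F i j := by
  by_cases htop : ∑' i, ⨅ j, F i j = ⊤
  · exact htop ▸ le_top
  refine ENNReal.le_of_forall_pos_le_add fun ε hε _ => ?_
  obtain ⟨ε', hε'0, hε'⟩ :=
    ENNReal.exists_pos_sum_of_countable' (ENNReal.coe_ne_zero.2 hε.ne') ι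
  have hnear : ∀ i, ∃ j, F i j < (⨅ j, F i j) + ε' i := fun i =>
    iInf_lt_iff.1 (ENNReal.lt_add_right (ENNReal.ne_top_of_tsum_ne_top htop i) (hε'0 i).ne')
  choose c hc using hnear
  calc ⨅ c : ∀ i, κ i, ∑' i, F i (c i) ≤ ∑' i, F i (c i) := iInf_le _ c
    _ ≤ ∑' i, ((⨅ j, F i j) + ε' i) := ENNReal.tsum_le_tsum fun i => (hc i).le
    _ = (∑' i, ⨅ j, F i j) + ∑' i, ε' i := ENNReal.tsum_add
    _ ≤ (∑' i, ⨅ j, F i j) + ε := by gcongr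

end Tsum

section LayerCake

variable {h : ℝ → ℝ≥0∞} {a : ℝ}

theorem monotone_two_pow_mul (ha : 0 ≤ a) : Monotone fun k : ℕ => 2 ^ k * a :=
  (pow_right_mono₀ one_le_two).mul_const ha

theorem iUnion_Ioc_two_pow_mul (ha : 0 < a) :
    ⋃ k : ℕ, Ioc (2 ^ k * a) (2 ^ (k + 1) * a) = Ioi a := by
  have hunbdd : ¬BddAbove (range fun k : ℕ => 2 ^ k * a) := not_bddAbove_of_tendsto_atTop <|
    (tendsto_pow_atTop_atTop_of_one_lt one_lt_two).atTop_mul_const ha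
  simpa using iUnion_Ioc_map_succ_eq_Ioi (fun k => monotone_two_pow_mul ha.le k.zero_le) hunbdd

theorem volume_Ioc_two_pow_mul (ha : 0 ≤ a) (k : ℕ) :
    volume (Ioc (2 ^ k * a) (2 ^ (k + 1) * a)) = ENNReal.ofReal a * 2 ^ k := by
  rw [Real.volume_Ioc, show (2 : ℝ) ^ (k + 1) * a - 2 ^ k * a = a * 2 ^ k by ring,
    ENNReal.ofReal_mul ha, ENNReal.ofReal_pow zero_le_two, ENNReal.ofReal_ofNat]

theorem lintegral_Ioi_le_tsum_of_antitone (hh : Antitone h) (ha : 0 < a) :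
    ∫⁻ s in Ioi a, h s ≤ ENNReal.ofReal a * ∑' k : ℕ, 2 ^ k * h (2 ^ k * a) := by
  rw [← iUnion_Ioc_two_pow_mul ha, ← ENNReal.tsum_mul_left]
  refine (lintegral_iUnion_le _ _).trans (ENNReal.tsum_le_tsum fun k => ?_)
  calc ∫⁻ s in Ioc (2 ^ k * a) (2 ^ (k + 1) * a), h s
      ≤ ∫⁻ _ in Ioc (2 ^ k * a) (2 ^ (k + 1) * a), h (2 ^ k * a) :=
        setLIntegral_mono' measurableSet_Ioc fun s hs => hh hs.1.le
    _ = ENNReal.ofReal a * (2 ^ k * h (2 ^ k * a)) := by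
        rw [setLIntegral_const, volume_Ioc_two_pow_mul ha.le, mul_comm, mul_assoc]

theorem tsum_le_lintegral_Ioi_of_antitone (hh : Antitone h) (ha : 0 < a) :
    ENNReal.ofReal a * ∑' k : ℕ, 2 ^ k * h (2 ^ (k + 1) * a) ≤ ∫⁻ s in Ioi a, h s := by
  have hdisj : Pairwise (Function.onFun Disjoint fun k : ℕ => Ioc (2 ^ k * a) (2 ^ (k + 1) * a)) :=
    (monotone_two_pow_mul ha.le).pairwise_disjoint_on_Ioc_succ
  rw [← iUnion_Ioc_two_pow_mul ha, lintegral_iUnion (fun _ => measurableSet_Ioc) hdisj,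
    ← ENNReal.tsum_mul_left]
  refine ENNReal.tsum_le_tsum fun k => ?_
  calc ENNReal.ofReal a * (2 ^ k * h (2 ^ (k + 1) * a))
      = ∫⁻ _ in Ioc (2 ^ k * a) (2 ^ (k + 1) * a), h (2 ^ (k + 1) * a) := by
        rw [setLIntegral_const, volume_Ioc_two_pow_mul ha.le, mul_comm (h _), mul_assoc]
    _ ≤ ∫⁻ s in Ioc (2 ^ k * a) (2 ^ (k + 1) * a), h s :=
        setLIntegral_mono' measurableSet_Ioc fun s hs => hh hs.2

end LayerCake

/-- The pair `(k, m)` indexing the dyadic cube `2^k (m + [0,1)ⁿ)`. -/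
abbrev DyadicIndex (n : ℕ) : Type := ℤ × (Fin n → ℤ)

namespace DyadicIndex

variable {n : ℕ} {δ d : ℝ}

/-- The side length of the dyadic cube with a given index. -/
def side (q : DyadicIndex n) : ℝ := 2 ^ q.1

/-- The dyadic cube with a given index. -/
def cube (q : DyadicIndex n) : Set (En n) := dyadicCube n q.1 q.2

/-- The lower corner of a dyadic cube; it carries the mass of the cube in `cornerMeasure`. -/
def corner (q : DyadicIndex n) : En n := WithLp.toLp 2 fun i => q.2 i * q.side

/-- The weight `ℓ(Q)^δ` of a dyadic cube `Q` in the `δ`-dimensional content. -/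
def gauge (δ : ℝ) (q : DyadicIndex n) : ℝ≥0∞ := ENNReal.ofReal q.side ^ δ

/-- The `3ⁿ` dyadic cubes of the same generation that touch a given one, itself included. -/
def neighbors (q : DyadicIndex n) : Finset (DyadicIndex n) :=
  {q.1} ×ˢ Fintype.piFinset fun i => Finset.Icc (q.2 i - 1) (q.2 i + 1)

theorem side_pos (q : DyadicIndex n) : 0 < q.side := zpow_pos two_pos _

theorem mem_cube {q : DyadicIndex n} {x : En n} :
    x ∈ q.cube ↔ ∀ i, q.2 i * q.side ≤ x i ∧ x i < (q.2 i + 1) * q.side := Iff.rfl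

theorem corner_mem_cube (q : DyadicIndex n) : q.corner ∈ q.cube := fun _ =>
  ⟨le_rfl, mul_lt_mul_of_pos_right (lt_add_one _) q.side_pos⟩

theorem exists_mem_cube (k : ℤ) (x : En n) : ∃ q : DyadicIndex n, q.1 = k ∧ x ∈ q.cube := by
  have hk : (0 : ℝ) < 2 ^ k := zpow_pos two_pos k
  exact ⟨(k, fun i => ⌊x i / 2 ^ k⌋), rfl, fun i =>
    ⟨(le_div_iff₀ hk).1 (Int.floor_le _), (div_lt_iff₀ hk).1 (Int.lt_floor_add_one _)⟩⟩

theorem dist_le_of_mem_cube {q : DyadicIndex n} {x y : En n} (hx : x ∈ q.cube) (hy : y ∈ q.cube) :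
    dist x y ≤ √n * q.side := by
  have hcoord : ∀ i, dist (x i) (y i) ^ 2 ≤ q.side ^ 2 := fun i => by
    have hxi := mem_cube.1 hx i
    have hyi := mem_cube.1 hy i
    rw [Real.dist_eq, sq_abs]
    exact sq_le_sq' (by linarith) (by linarith)
  calc dist x y = √(∑ i, dist (x i) (y i) ^ 2) := EuclideanSpace.dist_eq x y
    _ ≤ √(∑ _ : Fin n, q.side ^ 2) := Real.sqrt_le_sqrt (Finset.sum_le_sum fun _ _ => hcoord _)
    _ = √n * q.side := by
        rw [Finset.sum_const, Finset.card_fin, nsmul_eq_mul, Real.sqrt_mul n.cast_nonneg,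
          Real.sqrt_sq q.side_pos.le]

theorem volume_cube (q : DyadicIndex n) : volume q.cube = q.gauge n := by
  have hcube : q.cube = WithLp.ofLp ⁻¹'
      (univ.pi fun i => Ico (q.2 i * q.side) ((q.2 i + 1) * q.side)) := by
    ext x
    simp only [mem_cube, mem_preimage, mem_univ_pi, mem_Ico]
  rw [hcube, (PiLp.volume_preserving_ofLp (Fin n)).measure_preimage
    (MeasurableSet.univ_pi fun _ => measurableSet_Ico).nullMeasurableSet, Real.volume_pi_Ico]
  simp only [add_mul, one_mul, add_sub_cancel_left, Finset.prod_const, Finset.card_fin, gauge,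
    ENNReal.rpow_natCast]

theorem side_eq_of_mem_neighbors {p q : DyadicIndex n} (hp : p ∈ q.neighbors) :
    p.side = q.side := by
  rw [side, side, Finset.mem_singleton.1 (Finset.mem_product.1 hp).1]

theorem card_neighbors (q : DyadicIndex n) : q.neighbors.card = 3 ^ n := by
  have hthree : ∀ i, (Finset.Icc (q.2 i - 1) (q.2 i + 1)).card = 3 := fun i => by
    rw [Int.card_Icc]
    omega
  simp only [neighbors, Finset.card_product, Finset.card_singleton, Fintype.card_piFinset, hthree,
    Finset.prod_const, Finset.card_fin, one_mul]

theorem thickening_cube_subset (q : DyadicIndex n) :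
    thickening q.side q.cube ⊆ ⋃ p : q.neighbors, (p : DyadicIndex n).cube := by
  intro y hy
  obtain ⟨x, hx, hyx⟩ := mem_thickening_iff.1 hy
  obtain ⟨p, hp, hyp⟩ := exists_mem_cube q.1 y
  have hside : p.side = q.side := by rw [side, side, hp]
  have hadj : ∀ i, q.2 i - 1 ≤ p.2 i ∧ p.2 i ≤ q.2 i + 1 := fun i => by
    have hclose := abs_lt.1 ((PiLp.dist_apply_le y x i).trans_lt hyx)
    have hxi := mem_cube.1 hx i
    have hyi := hside ▸ mem_cube.1 hyp i
    have hlower : (q.2 i : ℝ) < p.2 i + 2 :=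
      lt_of_mul_lt_mul_right (by linarith) q.side_pos.le
    have hupper : (p.2 i : ℝ) < q.2 i + 2 :=
      lt_of_mul_lt_mul_right (by linarith) q.side_pos.le
    norm_cast at hlower hupper
    omega
  refine mem_iUnion.2 ⟨⟨p, ?_⟩, hyp⟩
  exact Finset.mem_product.2 ⟨Finset.mem_singleton.2 hp,
    Fintype.mem_piFinset.2 fun i => Finset.mem_Icc.2 (hadj i)⟩

theorem gauge_le_rpow_mul_gauge (hδd : δ ≤ d) (q : DyadicIndex n) {r : ℝ} (hr : q.side ≤ r) :
    q.gauge d ≤ ENNReal.ofReal r ^ (d - δ) * q.gauge δ := by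
  have hside : ENNReal.ofReal q.side ≠ 0 := (ENNReal.ofReal_pos.2 q.side_pos).ne'
  calc q.gauge d = ENNReal.ofReal q.side ^ (d - δ) * q.gauge δ := by
        rw [gauge, gauge, ← ENNReal.rpow_add _ _ hside ENNReal.ofReal_ne_top, sub_add_cancel]
    _ ≤ ENNReal.ofReal r ^ (d - δ) * q.gauge δ := by
        gcongr

theorem exists_gauge_le (n : ℕ) (hδ : 0 < δ) {ε : ℝ≥0∞} (hε : ε ≠ 0) :
    ∃ q : DyadicIndex n, q.gauge δ ≤ ε := by
  have hratio : (2⁻¹ : ℝ≥0∞) ^ δ < 1 := ENNReal.rpow_lt_one (by norm_num) hδ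
  obtain ⟨N, hN⟩ := ((ENNReal.tendsto_pow_atTop_nhds_zero_of_lt_one hratio).eventually_le_const
    hε.bot_lt).exists
  refine ⟨(-N, 0), le_of_eq_of_le ?_ hN⟩
  rw [gauge, side, zpow_neg, zpow_natCast, ← inv_pow, ENNReal.ofReal_pow (by norm_num),
    ENNReal.ofReal_inv_of_pos two_pos, ENNReal.ofReal_ofNat, ← ENNReal.rpow_natCast,
    ← ENNReal.rpow_natCast, ← ENNReal.rpow_mul, ← ENNReal.rpow_mul, mul_comm]

end DyadicIndex

section Content

variable {n : ℕ} {δ d : ℝ} {ι : Type*} {E F : Set (En n)}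

theorem dyadicContent_eq_iInf (δ : ℝ) (E : Set (En n)) :
    dyadicContent n δ E = ⨅ c : {c : ℕ → DyadicIndex n // E ⊆ interior (⋃ i, (c i).cube)},
      ∑' i, (c.1 i).gauge δ := by
  rw [dyadicContent, iInf_subtype']
  simp only [DyadicIndex.gauge, ENNReal.ofReal_rpow_of_pos (DyadicIndex.side_pos _)]
  rfl

theorem dyadicContent_mono (h : E ⊆ F) : dyadicContent n δ E ≤ dyadicContent n δ F :=
  le_iInf₂ fun c hc => iInf₂_le c (h.trans hc)

theorem dyadicContent_le_tsum_gauge [Countable ι] (hδ : 0 < δ) (c : ι → DyadicIndex n)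
    (hE : E ⊆ interior (⋃ i, (c i).cube)) : dyadicContent n δ E ≤ ∑' i, (c i).gauge δ := by
  refine ENNReal.le_of_forall_pos_le_add fun ε hε _ => ?_
  obtain ⟨ε', hε'0, hε'⟩ :=
    ENNReal.exists_pos_sum_of_countable' (ENNReal.coe_ne_zero.2 hε.ne') ℕ
  choose small hsmall using fun j => DyadicIndex.exists_gauge_le n hδ (hε'0 j).ne'
  -- The given cover, which may be finite, is padded to a sequence by arbitrarily small cubes.
  obtain ⟨_⟩ : Nonempty (Denumerable (ι ⊕ ℕ)) := nonempty_denumerable _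
  let enum : ℕ ≃ ι ⊕ ℕ := (Denumerable.eqv (ι ⊕ ℕ)).symm
  let padded : ι ⊕ ℕ → DyadicIndex n := Sum.elim c small
  have hcover : E ⊆ interior (⋃ j, (padded (enum j)).cube) := by
    refine hE.trans (interior_mono ?_)
    rw [enum.surjective.iUnion_comp fun i => (padded i).cube, iUnion_sum]
    exact subset_union_left
  calc dyadicContent n δ E ≤ ∑' j, (padded (enum j)).gauge δ := by
        rw [dyadicContent_eq_iInf]
        exact iInf_le_of_le ⟨padded ∘ enum, hcover⟩ le_rfl
    _ = ∑' i, (padded i).gauge δ := enum.tsum_eq fun i => (padded i).gauge δ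
    _ = ∑' i, (c i).gauge δ + ∑' j, (small j).gauge δ :=
        ENNReal.summable.tsum_sum ENNReal.summable
    _ ≤ ∑' i, (c i).gauge δ + ε := by
        gcongr
        exact (ENNReal.tsum_le_tsum hsmall).trans hε'.le

theorem dyadicContent_union_le (hδ : 0 < δ) (E F : Set (En n)) :
    dyadicContent n δ (E ∪ F) ≤ dyadicContent n δ E + dyadicContent n δ F := by
  rw [dyadicContent_eq_iInf δ E, dyadicContent_eq_iInf δ F]
  refine ENNReal.le_iInf_add_iInf fun b c => ?_
  calc dyadicContent n δ (E ∪ F) ≤ ∑' i, (Sum.elim b.1 c.1 i).gauge δ := by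
        refine dyadicContent_le_tsum_gauge hδ _ ?_
        rw [iUnion_sum]
        exact (union_subset_union b.2 c.2).trans subset_interior_union
    _ = ∑' i, (b.1 i).gauge δ + ∑' i, (c.1 i).gauge δ :=
        ENNReal.summable.tsum_sum ENNReal.summable

theorem dyadicContent_le_of_subset_iUnion_thickening [Countable ι] (hδ : 0 < δ)
    (c : ι → DyadicIndex n) (hE : E ⊆ ⋃ i, thickening (c i).side (c i).cube) :
    dyadicContent n δ E ≤ 3 ^ n * ∑' i, (c i).gauge δ := by
  calc dyadicContent n δ E ≤ ∑' p : Σ i, (c i).neighbors, (p.2 : DyadicIndex n).gauge δ := by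
        refine dyadicContent_le_tsum_gauge hδ _ (hE.trans (interior_maximal ?_
          (isOpen_iUnion fun i => isOpen_thickening)))
        rw [iUnion_sigma]
        exact iUnion_mono fun i => (c i).thickening_cube_subset
    _ = ∑' i, 3 ^ n * (c i).gauge δ := by
        rw [ENNReal.tsum_sigma']
        refine tsum_congr fun i => ?_
        have hgauge : ∀ p : (c i).neighbors, (p : DyadicIndex n).gauge δ = (c i).gauge δ :=
          fun p => by rw [DyadicIndex.gauge, DyadicIndex.side_eq_of_mem_neighbors p.2]; rfl
        simp only [hgauge, tsum_fintype, Finset.sum_const, Finset.card_univ, Fintype.card_coe,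
          DyadicIndex.card_neighbors, nsmul_eq_mul, Nat.cast_pow, Nat.cast_ofNat]
    _ = 3 ^ n * ∑' i, (c i).gauge δ := ENNReal.tsum_mul_left

theorem dyadicContent_le_of_subset_iUnion_ball [Countable ι] (hδ : 0 < δ) (x : ι → En n)
    {r : ι → ℝ} (hr : ∀ i, 0 < r i) (hE : E ⊆ ⋃ i, ball (x i) (r i)) :
    dyadicContent n δ E ≤ 3 ^ n * ∑' i, ENNReal.ofReal (2 * r i) ^ δ := by
  have hcube : ∀ i, ∃ q : DyadicIndex n, x i ∈ q.cube ∧ r i ≤ q.side ∧ q.side ≤ 2 * r i := by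
    intro i
    obtain ⟨k, hkr, hrk⟩ := exists_mem_Ioc_zpow (hr i) one_lt_two
    obtain ⟨q, hq, hx⟩ := DyadicIndex.exists_mem_cube (k + 1) (x i)
    have hside : q.side = 2 * 2 ^ k := by
      rw [DyadicIndex.side, hq, zpow_add_one₀ two_ne_zero, mul_comm]
    refine ⟨q, hx, ?_, ?_⟩
    · rwa [DyadicIndex.side, hq]
    · linarith
  choose q hx hrq hqr using hcube
  calc dyadicContent n δ E ≤ 3 ^ n * ∑' i, (q i).gauge δ :=
        dyadicContent_le_of_subset_iUnion_thickening hδ q <| hE.trans <| iUnion_mono fun i =>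
          (ball_subset_ball (hrq i)).trans (ball_subset_thickening (hx i) _)
    _ ≤ 3 ^ n * ∑' i, ENNReal.ofReal (2 * r i) ^ δ := by
        gcongr with i
        exact ENNReal.rpow_le_rpow (ENNReal.ofReal_le_ofReal (hqr i)) hδ.le

theorem rpow_volume_le_dyadicContent (hd : 0 < d) (hdn : d ≤ n) (E : Set (En n)) :
    volume E ^ (d / n) ≤ dyadicContent n d E := by
  have hn : (0 : ℝ) < n := hd.trans_le hdn
  rw [dyadicContent_eq_iInf]
  refine le_iInf fun ⟨c, hc⟩ => ?_
  calc volume E ^ (d / n) ≤ (∑' i, (c i).gauge n) ^ (d / n) := by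
        gcongr
        calc volume E ≤ volume (⋃ i, (c i).cube) := measure_mono (hc.trans interior_subset)
          _ ≤ ∑' i, volume (c i).cube := measure_iUnion_le _
          _ = ∑' i, (c i).gauge n := tsum_congr fun i => (c i).volume_cube
    _ ≤ ∑' i, (c i).gauge n ^ (d / n) :=
        rpow_tsum_le_tsum_rpow (div_pos hd hn) ((div_le_one hn).2 hdn) _
    _ = ∑' i, (c i).gauge d := tsum_congr fun i => by
        rw [DyadicIndex.gauge, ← ENNReal.rpow_mul, mul_div_cancel₀ _ hn.ne', DyadicIndex.gauge]

theorem volume_ball_rpow_mul_le_dyadicContent (hd : 0 < d) (hdn : d ≤ n) (x : En n) {r : ℝ}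
    (hr : 0 < r) : volume (ball (0 : En n) 1) ^ (d / n) * ENNReal.ofReal r ^ d ≤
      dyadicContent n d (ball x r) := by
  have hn : (n : ℝ) ≠ 0 := (hd.trans_le hdn).ne'
  refine le_of_eq_of_le ?_ (rpow_volume_le_dyadicContent hd hdn (ball x r))
  rw [Measure.addHaar_ball_of_pos volume x hr, finrank_euclideanSpace_fin,
    ENNReal.mul_rpow_of_nonneg _ _ (by positivity), ENNReal.ofReal_pow hr.le,
    ← ENNReal.rpow_natCast, ← ENNReal.rpow_mul, mul_div_cancel₀ _ hn, mul_comm]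

end Content

section Choquet

variable {n : ℕ} {d a : ℝ} {g : En n → ℝ≥0∞} {Ω : Set (En n)}

theorem antitone_dyadicContent_superlevel (n : ℕ) (d : ℝ) (Ω : Set (En n)) (g : En n → ℝ≥0∞) :
    Antitone fun s : ℝ => dyadicContent n d {x | x ∈ Ω ∧ ENNReal.ofReal s < g x} :=
  fun _ _ hst => dyadicContent_mono fun _ hx =>
    ⟨hx.1, (ENNReal.ofReal_le_ofReal hst).trans_lt hx.2⟩

theorem choquetIntegral_le_tsum (ha : 0 < a) :
    choquetIntegral n d Ω g ≤ ENNReal.ofReal a * (dyadicContent n d Ω +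
      ∑' k : ℕ, 2 ^ k * dyadicContent n d {x | x ∈ Ω ∧ ENNReal.ofReal (2 ^ k * a) < g x}) := by
  have hanti := antitone_dyadicContent_superlevel n d Ω g
  rw [choquetIntegral, ← Ioc_union_Ioi_eq_Ioi ha.le, mul_add]
  refine (lintegral_union_le _ _ _).trans
    (add_le_add ?_ (lintegral_Ioi_le_tsum_of_antitone hanti ha))
  calc ∫⁻ s in Ioc 0 a, dyadicContent n d {x | x ∈ Ω ∧ ENNReal.ofReal s < g x}
      ≤ ∫⁻ _ in Ioc 0 a, dyadicContent n d Ω :=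
        lintegral_mono fun s => dyadicContent_mono fun x hx => hx.1
    _ = ENNReal.ofReal a * dyadicContent n d Ω := by
        rw [setLIntegral_const, Real.volume_Ioc, sub_zero, mul_comm]

theorem tsum_le_choquetIntegral (ha : 0 < a) :
    ENNReal.ofReal (a / 2) *
      ∑' k : ℕ, 2 ^ k * dyadicContent n d {x | x ∈ Ω ∧ ENNReal.ofReal (2 ^ k * a) < g x} ≤
      choquetIntegral n d Ω g := by
  have hdyadic := (tsum_le_lintegral_Ioi_of_antitone (antitone_dyadicContent_superlevel n d Ω g)
    (half_pos ha)).trans (lintegral_mono_set (Ioi_subset_Ioi (half_pos ha).le))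
  simpa only [choquetIntegral, pow_succ, mul_assoc, mul_div_cancel₀ a (two_ne_zero' ℝ)]
    using hdyadic

theorem dyadicContent_ball_le_tsum_of_lt_ballAvg {x : En n} {r : ℝ} (ha : 0 < a)
    (havg : ENNReal.ofReal (2 * a) < ballAvg n d g x r) :
    dyadicContent n d (ball x r) ≤ ∑' k : ℕ, 2 ^ k *
      dyadicContent n d {y | y ∈ ball x r ∧ ENNReal.ofReal (2 ^ k * a) < g y} := by
  have hlt := (ENNReal.mul_lt_of_lt_div havg).trans_le (choquetIntegral_le_tsum ha)
  rw [two_mul, ENNReal.ofReal_add ha.le ha.le, ← two_mul, mul_comm 2, mul_assoc] at hlt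
  have hlt' := lt_of_mul_lt_mul_left' hlt
  rw [two_mul] at hlt'
  exact (lt_of_add_lt_add_left hlt').le

end Choquet

section CornerMeasure

variable {n : ℕ} {δ d : ℝ} {ι : Type*}

/-- The measure with an atom of mass `ℓ(Q)^δ` at the corner of each cube `Q` of a family. It turns
the sum that bounds a content into a measure, hence additive on disjoint balls. -/
def cornerMeasure (δ : ℝ) (c : ι → DyadicIndex n) : Measure (En n) :=
  Measure.sum fun i => (c i).gauge δ • Measure.dirac (c i).corner

/-- The weighted superposition `∑ₖ 2^k μₖ` of the corner measures `μₖ` of covers of the superlevel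
sets `{2^k a < g}`; its total mass is a discretized Choquet integral of `g`. -/
def layeredCornerMeasure (δ : ℝ) (c : ℕ → ℕ → DyadicIndex n) : Measure (En n) :=
  Measure.sum fun k => (2 : ℝ≥0∞) ^ k • cornerMeasure δ (c k)

theorem cornerMeasure_univ (c : ι → DyadicIndex n) :
    cornerMeasure δ c univ = ∑' i, (c i).gauge δ := by
  simp only [cornerMeasure, Measure.sum_apply _ MeasurableSet.univ, Measure.smul_apply,
    measure_univ, smul_eq_mul, mul_one]

theorem layeredCornerMeasure_univ (c : ℕ → ℕ → DyadicIndex n) :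
    layeredCornerMeasure δ c univ = ∑' k, 2 ^ k * ∑' i, (c k i).gauge δ := by
  simp only [layeredCornerMeasure, Measure.sum_apply _ MeasurableSet.univ, Measure.smul_apply,
    cornerMeasure_univ, smul_eq_mul]

theorem tsum_subtype_gauge_le_cornerMeasure (c : ι → DyadicIndex n) {J : Set ι} {S : Set (En n)}
    (hJ : ∀ i ∈ J, (c i).corner ∈ S) : ∑' i : J, (c i).gauge δ ≤ cornerMeasure δ c S := by
  rw [tsum_subtype J fun i => (c i).gauge δ]
  refine (ENNReal.tsum_le_tsum fun i => ?_).trans (Measure.le_sum_apply _ _)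
  by_cases hi : i ∈ J
  · rw [indicator_of_mem hi, Measure.smul_apply, Measure.dirac_apply_of_mem (hJ i hi), smul_eq_mul,
      mul_one]
  · rw [indicator_of_notMem hi]
    exact zero_le

theorem dyadicContent_le_cornerMeasure_closedBall [Countable ι] (hd : 0 < d) (hδd : δ ≤ d)
    (c : ι → DyadicIndex n) {x : En n} {r : ℝ} (hx : ∀ i, x ∉ thickening (c i).side (c i).cube)
    {E : Set (En n)} (hEball : E ⊆ ball x r) (hEcover : E ⊆ ⋃ i, (c i).cube) :
    dyadicContent n d E ≤
      3 ^ n * (ENNReal.ofReal r ^ (d - δ) * cornerMeasure δ c (closedBall x ((√n + 1) * r))) := by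
  let J : Set ι := {i | ((c i).cube ∩ ball x r).Nonempty}
  have hside : ∀ i ∈ J, (c i).side ≤ r := by
    rintro i ⟨y, hy, hyx⟩
    by_contra! hlt
    exact hx i (mem_thickening_iff.2 ⟨y, hy, (mem_ball'.1 hyx).trans hlt⟩)
  have hcorner : ∀ i ∈ J, (c i).corner ∈ closedBall x ((√n + 1) * r) := by
    intro i hi
    obtain ⟨y, hy, hyx⟩ := id hi
    calc dist (c i).corner x ≤ dist (c i).corner y + dist y x := dist_triangle _ _ _
      _ ≤ √n * (c i).side + r :=
          add_le_add (DyadicIndex.dist_le_of_mem_cube (c i).corner_mem_cube hy) hyx.le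
      _ ≤ √n * r + r := by
          gcongr
          exact hside i hi
      _ = (√n + 1) * r := by ring
  have hcover : E ⊆ ⋃ i : J, thickening (c i).side (c i).cube := fun y hy => by
    obtain ⟨i, hi⟩ := mem_iUnion.1 (hEcover hy)
    exact mem_iUnion.2 ⟨⟨i, y, hi, hEball hy⟩, self_subset_thickening (c i).side_pos _ hi⟩
  calc dyadicContent n d E ≤ 3 ^ n * ∑' i : J, (c i).gauge d :=
        dyadicContent_le_of_subset_iUnion_thickening hd (fun i : J => c i) hcover
    _ ≤ 3 ^ n * ∑' i : J, ENNReal.ofReal r ^ (d - δ) * (c i).gauge δ := by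
        gcongr with i
        exact (c i).gauge_le_rpow_mul_gauge hδd (hside i i.2)
    _ = 3 ^ n * (ENNReal.ofReal r ^ (d - δ) * ∑' i : J, (c i).gauge δ) := by
        rw [ENNReal.tsum_mul_left]
    _ ≤ _ := by
        gcongr
        exact tsum_subtype_gauge_le_cornerMeasure c hcorner

theorem rpow_le_layeredCornerMeasure_closedBall (hd : 0 < d) (hδd : δ ≤ d) (hdn : d ≤ n)
    {g : En n → ℝ≥0∞} {a : ℝ} (ha : 0 < a) {c : ℕ → ℕ → DyadicIndex n}
    (hc : ∀ k, {y | ENNReal.ofReal (2 ^ k * a) < g y} ⊆ ⋃ i, (c k i).cube) {x : En n}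
    (hx : ∀ k i, x ∉ thickening (c k i).side (c k i).cube) {r : ℝ} (hr : 0 < r)
    (havg : ENNReal.ofReal (2 * a) < ballAvg n d g x r) :
    volume (ball (0 : En n) 1) ^ (d / n) * ENNReal.ofReal r ^ δ ≤
      3 ^ n * layeredCornerMeasure δ c (closedBall x ((√n + 1) * r)) := by
  have hr0 : ENNReal.ofReal r ≠ 0 := (ENNReal.ofReal_pos.2 hr).ne'
  have hscale0 : ENNReal.ofReal r ^ (d - δ) ≠ 0 := by
    simp only [ne_eq, ENNReal.rpow_eq_zero_iff, hr0, ENNReal.ofReal_ne_top, false_and, or_self,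
      not_false_eq_true]
  have hscale : ENNReal.ofReal r ^ (d - δ) ≠ ⊤ :=
    ENNReal.rpow_ne_top_of_nonneg (sub_nonneg.2 hδd) ENNReal.ofReal_ne_top
  set B := closedBall x ((√n + 1) * r)
  rw [← ENNReal.mul_le_mul_iff_right hscale0 hscale]
  calc ENNReal.ofReal r ^ (d - δ) *
        (volume (ball (0 : En n) 1) ^ (d / n) * ENNReal.ofReal r ^ δ)
      = volume (ball (0 : En n) 1) ^ (d / n) * ENNReal.ofReal r ^ d := by
        rw [mul_left_comm, ← ENNReal.rpow_add _ _ hr0 ENNReal.ofReal_ne_top, sub_add_cancel]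
    _ ≤ dyadicContent n d (ball x r) := volume_ball_rpow_mul_le_dyadicContent hd hdn x hr
    _ ≤ ∑' k : ℕ, 2 ^ k *
          dyadicContent n d {y | y ∈ ball x r ∧ ENNReal.ofReal (2 ^ k * a) < g y} :=
        dyadicContent_ball_le_tsum_of_lt_ballAvg ha havg
    _ ≤ ∑' k : ℕ, 2 ^ k * (3 ^ n * (ENNReal.ofReal r ^ (d - δ) * cornerMeasure δ (c k) B)) := by
        gcongr with k
        exact dyadicContent_le_cornerMeasure_closedBall hd hδd (c k) (hx k) (fun y hy => hy.1)
          fun y hy => hc k hy.2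
    _ = 3 ^ n * (ENNReal.ofReal r ^ (d - δ) * ∑' k : ℕ, 2 ^ k * cornerMeasure δ (c k) B) := by
        simp only [← ENNReal.tsum_mul_left, mul_left_comm]
    _ = ENNReal.ofReal r ^ (d - δ) * (3 ^ n * layeredCornerMeasure δ c B) := by
        simp only [layeredCornerMeasure, Measure.sum_apply _ isClosed_closedBall.measurableSet,
          Measure.smul_apply, smul_eq_mul, mul_left_comm, B]

end CornerMeasure

section Vitali

variable {n : ℕ} {δ : ℝ}

theorem dyadicContent_le_of_rpow_le_measure_closedBall (hδ : 0 < δ) (μ : Measure (En n))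
    {A : Set (En n)} (hA : ∀ x ∈ A, ∃ r > 0, ENNReal.ofReal r ^ δ ≤ μ (closedBall x r)) :
    dyadicContent n δ A ≤ 3 ^ n * (10 ^ δ * μ univ) := by
  have h10 : (10 : ℝ≥0∞) ^ δ ≠ 0 := (ENNReal.rpow_pos (by norm_num) (by norm_num)).ne'
  by_cases hμ : μ univ = ⊤
  · rw [hμ, ENNReal.mul_top h10, ENNReal.mul_top (by positivity)]
    exact le_top
  choose! r hr hrμ using hA
  have hbdd : ∀ x ∈ A, r x ≤ (μ univ ^ δ⁻¹).toReal := fun x hx =>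
    (ENNReal.ofReal_le_iff_le_toReal (ENNReal.rpow_ne_top_of_nonneg (by positivity) hμ)).1 <|
      (ENNReal.le_rpow_inv_iff hδ).2 ((hrμ x hx).trans (measure_mono (subset_univ _)))
  obtain ⟨u, huA, hdisj, henlarge⟩ :=
    Vitali.exists_disjoint_subfamily_covering_enlargement_closedBall A (fun x => x) r _ hbdd 4
      (by norm_num)
  have hcount : u.Countable := hdisj.countable_of_nonempty_interior fun x hx =>
    ⟨x, ball_subset_interior_closedBall (mem_ball_self (hr x (huA hx)))⟩
  have := hcount.to_subtype
  have hcover : A ⊆ ⋃ y : u, ball (y : En n) (5 * r y) := fun x hx => by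
    obtain ⟨y, hy, hsub⟩ := henlarge x hx
    have hxy : dist x y ≤ 4 * r y := hsub (mem_closedBall_self (hr x hx).le)
    exact mem_iUnion.2 ⟨⟨y, hy⟩, mem_ball.2 (by linarith [hr y (huA hy)])⟩
  calc dyadicContent n δ A ≤ 3 ^ n * ∑' y : u, ENNReal.ofReal (2 * (5 * r y)) ^ δ :=
        dyadicContent_le_of_subset_iUnion_ball hδ _
          (fun y => mul_pos (by norm_num) (hr y (huA y.2))) hcover
    _ ≤ 3 ^ n * ∑' y : u, 10 ^ δ * μ (closedBall (y : En n) (r y)) := by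
        gcongr with y
        rw [show 2 * (5 * r y) = 10 * r y by ring, ENNReal.ofReal_mul (by norm_num),
          ENNReal.ofReal_ofNat, ENNReal.mul_rpow_of_nonneg _ _ hδ.le]
        gcongr
        exact hrμ y (huA y.2)
    _ = 3 ^ n * (10 ^ δ * μ (⋃ y ∈ u, closedBall y (r y))) := by
        rw [ENNReal.tsum_mul_left,
          measure_biUnion hcount hdisj fun _ _ => isClosed_closedBall.measurableSet]
    _ ≤ 3 ^ n * (10 ^ δ * μ univ) := by
        gcongr
        exact subset_univ _

end Vitali

section WeakType

variable {n : ℕ} {δ d : ℝ} {g : En n → ℝ≥0∞} {a : ℝ}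

/-- The constant by which the discretized Choquet integral bounds the content of a superlevel set
of the maximal function: the first summand accounts for the points far from all covering cubes,
the second for the `3ⁿ` neighbors of each cube. -/
def weakTypeConst (n : ℕ) (δ d : ℝ) : ℝ≥0∞ :=
  3 ^ n * (10 ^ δ * (ENNReal.ofReal (√n + 1) ^ δ *
    (3 ^ n / volume (ball (0 : En n) 1) ^ (d / n)))) + 3 ^ n

theorem volume_unitBall_rpow_pos (n : ℕ) (p : ℝ) : 0 < volume (ball (0 : En n) 1) ^ p :=
  ENNReal.rpow_pos (measure_ball_pos volume _ one_pos) measure_ball_lt_top.ne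

theorem weakTypeConst_ne_zero : weakTypeConst n δ d ≠ 0 :=
  ne_bot_of_le_ne_bot (NeZero.ne ((3 : ℝ≥0∞) ^ n)) le_add_self

theorem weakTypeConst_ne_top (hδ : 0 ≤ δ) : weakTypeConst n δ d ≠ ⊤ := by
  have h3 : (3 : ℝ≥0∞) ^ n ≠ ⊤ := ENNReal.pow_ne_top (by norm_num)
  refine ENNReal.add_ne_top.2 ⟨ENNReal.mul_ne_top h3 (ENNReal.mul_ne_top ?_
    (ENNReal.mul_ne_top ?_ (ENNReal.div_ne_top h3 (volume_unitBall_rpow_pos n _).ne'))), h3⟩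
  · exact ENNReal.rpow_ne_top_of_nonneg hδ (by norm_num)
  · exact ENNReal.rpow_ne_top_of_nonneg hδ ENNReal.ofReal_ne_top

theorem dyadicContent_far_superlevel_maximal_le (hδ : 0 < δ) (hδd : δ ≤ d) (hdn : d ≤ n)
    (ha : 0 < a) (c : ℕ → ℕ → DyadicIndex n)
    (hc : ∀ k, {x | ENNReal.ofReal (2 ^ k * a) < g x} ⊆ ⋃ i, (c k i).cube) :
    dyadicContent n δ ({x | ENNReal.ofReal (2 * a) < maximal n d g x} \
        ⋃ p : ℕ × ℕ, thickening (c p.1 p.2).side (c p.1 p.2).cube) ≤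
      3 ^ n * (10 ^ δ * (ENNReal.ofReal (√n + 1) ^ δ *
        (3 ^ n / volume (ball (0 : En n) 1) ^ (d / n)) * ∑' k, 2 ^ k * ∑' i, (c k i).gauge δ)) := by
  rw [← layeredCornerMeasure_univ, ← smul_eq_mul (b := layeredCornerMeasure δ c univ),
    ← Measure.smul_apply]
  refine dyadicContent_le_of_rpow_le_measure_closedBall hδ _ fun x ⟨hmax, hfar⟩ => ?_
  have hx : ∀ k i, x ∉ thickening (c k i).side (c k i).cube := fun k i hxi =>
    hfar (mem_iUnion.2 ⟨(k, i), hxi⟩)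
  obtain ⟨r, hr, havg⟩ : ∃ r > 0, ENNReal.ofReal (2 * a) < ballAvg n d g x r := by
    simpa only [maximal, mem_ofPred_eq, lt_iSup_iff, exists_prop] using hmax
  have hdensity :=
    rpow_le_layeredCornerMeasure_closedBall (hδ.trans_le hδd) hδd hdn ha hc hx hr havg
  refine ⟨(√n + 1) * r, by positivity, ?_⟩
  rw [ENNReal.ofReal_mul (by positivity), ENNReal.mul_rpow_of_nonneg _ _ hδ.le, Measure.smul_apply,
    smul_eq_mul, mul_assoc]
  gcongr
  rw [← ENNReal.mul_div_right_comm, ENNReal.le_div_iff_mul_le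
    (.inl (volume_unitBall_rpow_pos n _).ne') (.inl <| ENNReal.rpow_ne_top_of_nonneg
      (div_nonneg (hδ.le.trans hδd) n.cast_nonneg) measure_ball_lt_top.ne), mul_comm]
  exact hdensity

theorem dyadicContent_superlevel_maximal_le_tsum_gauge (hδ : 0 < δ) (hδd : δ ≤ d) (hdn : d ≤ n)
    (ha : 0 < a) (c : ℕ → ℕ → DyadicIndex n)
    (hc : ∀ k, {x | ENNReal.ofReal (2 ^ k * a) < g x} ⊆ ⋃ i, (c k i).cube) :
    dyadicContent n δ {x | ENNReal.ofReal (2 * a) < maximal n d g x} ≤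
      weakTypeConst n δ d * ∑' k, 2 ^ k * ∑' i, (c k i).gauge δ := by
  set A := {x | ENNReal.ofReal (2 * a) < maximal n d g x}
  set T := ⋃ p : ℕ × ℕ, thickening (c p.1 p.2).side (c p.1 p.2).cube
  have hfar := dyadicContent_far_superlevel_maximal_le hδ hδd hdn ha c hc
  have hnear : dyadicContent n δ T ≤ 3 ^ n * ∑' k, 2 ^ k * ∑' i, (c k i).gauge δ :=
    calc dyadicContent n δ T ≤ 3 ^ n * ∑' p : ℕ × ℕ, (c p.1 p.2).gauge δ :=
          dyadicContent_le_of_subset_iUnion_thickening hδ _ Subset.rfl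
      _ = 3 ^ n * ∑' k, ∑' i, (c k i).gauge δ := by
          rw [ENNReal.tsum_prod (f := fun k i => (c k i).gauge δ)]
      _ ≤ _ := by
          gcongr with k
          exact le_mul_of_one_le_left' (one_le_pow₀ one_le_two)
  calc dyadicContent n δ A ≤ dyadicContent n δ ((A \ T) ∪ T) :=
        dyadicContent_mono (subset_sdiff_union A T)
    _ ≤ dyadicContent n δ (A \ T) + dyadicContent n δ T := dyadicContent_union_le hδ _ _
    _ ≤ _ := add_le_add hfar hnear
    _ = _ := by rw [weakTypeConst]; ring

theorem dyadicContent_superlevel_maximal_le_tsum (hδ : 0 < δ) (hδd : δ ≤ d) (hdn : d ≤ n)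
    (ha : 0 < a) :
    dyadicContent n δ {x | ENNReal.ofReal (2 * a) < maximal n d g x} ≤ weakTypeConst n δ d *
      ∑' k : ℕ, 2 ^ k * dyadicContent n δ {x | x ∈ univ ∧ ENNReal.ofReal (2 ^ k * a) < g x} := by
  have h2 : ∀ k : ℕ, (2 : ℝ≥0∞) ^ k ≠ ⊤ := fun k => ENNReal.pow_ne_top (by norm_num)
  simp only [mem_univ, true_and, dyadicContent_eq_iInf, ENNReal.mul_iInf_of_ne (NeZero.ne _) (h2 _)]
  rw [← dyadicContent_eq_iInf]
  refine le_trans ?_ (mul_le_mul_right (iInf_tsum_le_tsum_iInf _) _)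
  rw [ENNReal.mul_iInf_of_ne weakTypeConst_ne_zero (weakTypeConst_ne_top hδ.le)]
  exact le_iInf fun c => dyadicContent_superlevel_maximal_le_tsum_gauge hδ hδd hdn ha
    (fun k => (c k).1) fun k => (c k).2.trans interior_subset

theorem weak_type_maximal_n_general (n : ℕ) {δ d : ℝ} (hδ : 0 < δ) (hδd : δ ≤ d) (hdn : d ≤ n) :
    ∃ c : ℝ, 0 < c ∧ ∀ (g : En n → ℝ≥0∞) (t : ℝ), 0 < t →
      dyadicContent n δ {x | ENNReal.ofReal t < maximal n d g x} ≤
        ENNReal.ofReal (c / t) * choquetIntegral n δ univ g := by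
  have hconst : weakTypeConst n δ d ≠ ⊤ := weakTypeConst_ne_top hδ.le
  have hC := ENNReal.toReal_pos weakTypeConst_ne_zero hconst
  set C := (weakTypeConst n δ d).toReal
  refine ⟨C * 4, by positivity, fun g t ht => ?_⟩
  have hscale : ENNReal.ofReal (C * 4 / t) * ENNReal.ofReal (t / 2 / 2) = weakTypeConst n δ d := by
    rw [← ENNReal.ofReal_mul (by positivity), show C * 4 / t * (t / 2 / 2) = C by field_simp; ring,
      ENNReal.ofReal_toReal hconst]
  calc dyadicContent n δ {x | ENNReal.ofReal t < maximal n d g x}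
      ≤ weakTypeConst n δ d * ∑' k : ℕ,
          2 ^ k * dyadicContent n δ {x | x ∈ univ ∧ ENNReal.ofReal (2 ^ k * (t / 2)) < g x} := by
        simpa only [mul_div_cancel₀ t (two_ne_zero' ℝ)] using
          dyadicContent_superlevel_maximal_le_tsum hδ hδd hdn (half_pos ht)
    _ ≤ ENNReal.ofReal (C * 4 / t) * choquetIntegral n δ univ g := by
        rw [← hscale, mul_assoc]
        gcongr
        exact tsum_le_choquetIntegral (half_pos ht)

end WeakType

/-- weak-type estimate for the `n`-dimensional Hausdorff-content centred
maximal operator `M^n` with respect to `H̃^δ_∞`, `0 < δ < n`, for arbitrary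
extended-real-valued functions that are locally `nL¹(H̃^δ_∞)`. -/
theorem weak_type_maximal_n (n : ℕ) (hn : 1 ≤ n) (δ : ℝ) (hδ0 : 0 < δ) (hδn : δ < n) :
    ∃ c : ℝ, 0 < c ∧ ∀ f : En n → EReal,
      (∀ K : Set (En n), Bornology.IsBounded K → choquetIntegralEAbs n δ K f < ⊤) →
      ∀ t : ℝ, 0 < t →
        dyadicContent n δ
            {x | ENNReal.ofReal t < maximal n (n : ℝ) (fun y => (f y).abs) x} ≤
          ENNReal.ofReal (c / t) * choquetIntegralEAbs n δ univ f := by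
  obtain ⟨c, hc, hweak⟩ := weak_type_maximal_n_general n hδ0 hδn.le le_rfl
  exact ⟨c, hc, fun f _ t ht => hweak _ t ht⟩
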